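/- Let f be a quasiperiodically forced circle homeomorphism over an irrational ω with lift F whose fibered rotation number is ρ₀. Suppose f is semi-conjugate to the irrational torus translation R(θ,x) := (θ+ω, x+ρ): there is a continuous surjective map h : T¹×T¹ → T¹×T¹ with π₁∘h = π₁ and h∘f = R∘h, whose fiber maps h_θ are monotone circle maps of degree one (h admits a lift H(θ,x) = (θ, H_θ(x)) with each H_θ : ℝ → ℝ continuous, nondecreasing and H_θ(x+1) = H_θ(x)+1), and assume ω, ρ and 1 are rationally independent (no (a,b,c) ∈ ℤ³ \ {(0,0,0)} with aω + bρ + c = 0). Then for every ε > 0, if ρ₊ is the fibered rotation number of F_ε and ρ₋ that of F_{−ε}, one has ρ₋ < ρ₀ < ρ₊. -/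

import Mathlib

open Filter Topology MeasureTheory
open scoped ENNReal

noncomputable section

/-- The circle `T¹ = ℝ/ℤ`. -/
abbrev T1 := AddCircle (1 : ℝ)

/-- Fiberwise iterate of the skew product: `fiberIter ω F n θ x = F^n_θ(x)`. -/
def fiberIter (ω : ℝ) (F : T1 → ℝ → ℝ) : ℕ → T1 → ℝ → ℝ
  | 0, _, x => x
  | n + 1, θ, x => fiberIter ω F n (θ + (ω : T1)) (F θ x)

/-- `F` is (the fiber part of) a lift of a quasiperiodically forced circle homeomorphism
over `ω`: `F(θ,x) = (θ+ω, F_θ(x))`, each `F_θ` a strictly increasing homeomorphism of `ℝ`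
commuting with `x ↦ x+1`. -/
structure IsQpfLift (ω : ℝ) (F : T1 → ℝ → ℝ) : Prop where
  cont : Continuous fun p : T1 × ℝ => F p.1 p.2
  mono : ∀ θ, StrictMono (F θ)
  surj : ∀ θ, Function.Surjective (F θ)
  per  : ∀ θ x, F θ (x + 1) = F θ x + 1

/-- `ρ` is the fibered rotation number of the lift `F`. -/
def HasRotNum (ω : ℝ) (F : T1 → ℝ → ℝ) (ρ : ℝ) : Prop :=
  ∀ θ x, Tendsto (fun n : ℕ => (fiberIter ω F n θ x - x) / n) atTop (𝓝 ρ)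

lemma aux_mF_add (n : Fin 2 → ℤ) (x y : UnitAddTorus (Fin 2)) :
    UnitAddTorus.mFourier n (x + y) = UnitAddTorus.mFourier n x * UnitAddTorus.mFourier n y := by
  simp [UnitAddTorus.mFourier, fourier_apply, AddCircle.toCircle_add]
  ring

lemma aux_mF_ne (ω ρ : ℝ)
    (hind : ∀ a b c : ℤ, (a : ℝ) * ω + (b : ℝ) * ρ + (c : ℝ) = 0 → a = 0 ∧ b = 0 ∧ c = 0)
    (n : Fin 2 → ℤ) (hn : n ≠ 0) :
    UnitAddTorus.mFourier n (![(ω : T1), (ρ : T1)] : UnitAddTorus (Fin 2)) ≠ 1 := by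
  intro h
  have h2 : Complex.exp (2 * Real.pi * Complex.I * (n 0 * ω + n 1 * ρ)) = 1 := by
    rw [← h]
    simp only [UnitAddTorus.mFourier, ContinuousMap.coe_mk, Fin.prod_univ_two, Matrix.cons_val_zero,
      Matrix.cons_val_one, fourier_coe_apply]
    rw [← Complex.exp_add]
    congr 1
    push_cast
    ring
  rw [Complex.exp_eq_one_iff] at h2
  obtain ⟨m, hm⟩ := h2
  have h3 : ((n 0 : ℝ) * ω + (n 1 : ℝ) * ρ + ((-m : ℤ) : ℝ)) = 0 := by
    have hpi : (2 * Real.pi * Complex.I : ℂ) ≠ 0 := Complex.two_pi_I_ne_zero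
    have : ((n 0 * ω + n 1 * ρ : ℂ)) = m := by
      apply mul_left_cancel₀ hpi
      rw [hm]; ring
    have h4 : (((n 0 : ℝ) * ω + (n 1 : ℝ) * ρ : ℝ) : ℂ) = ((m : ℝ) : ℂ) := by
      push_cast; exact this
    have h5 := Complex.ofReal_injective h4
    push_cast
    linarith
  obtain ⟨h0, h1, -⟩ := hind _ _ _ h3
  apply hn
  ext i
  fin_cases i <;> simp [h0, h1]

lemma aux_vol : (volume : Measure (UnitAddTorus (Fin 2))).real Set.univ = 1 := by
  have : (volume : Measure (UnitAddTorus (Fin 2))) Set.univ = 1 := by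
    rw [← Set.pi_univ Set.univ, volume_pi_pi]
    simp [AddCircle.measure_univ]
  simp [Measure.real, this]

lemma aux_avg (g p : UnitAddTorus (Fin 2))
    (hg : ∀ n : Fin 2 → ℤ, n ≠ 0 → UnitAddTorus.mFourier n g ≠ 1)
    (ψ : C(UnitAddTorus (Fin 2), ℂ))
    (hψ : ψ ∈ Submodule.span ℂ (Set.range (UnitAddTorus.mFourier (d := Fin 2)))) :
    Tendsto (fun N : ℕ => (N : ℂ)⁻¹ * ∑ j ∈ Finset.range N, ψ (p + j • g)) atTop
      (𝓝 (∫ x, ψ x)) := by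
  have hint : ∀ φ : C(UnitAddTorus (Fin 2), ℂ), Integrable φ := fun φ =>
    φ.continuous.integrable_of_hasCompactSupport (HasCompactSupport.of_compactSpace _)
  induction hψ using Submodule.span_induction with
  | mem ψ h =>
    obtain ⟨n, rfl⟩ := h
    by_cases hn : n = 0
    · subst hn
      simp only [UnitAddTorus.mFourier_zero, ContinuousMap.one_apply, Finset.sum_const,
        Finset.card_range, nsmul_eq_mul, mul_one, integral_const]
      refine (tendsto_congr' ?_).2 tendsto_const_nhds
      filter_upwards [eventually_gt_atTop 0] with N hN
      have : (N : ℂ) ≠ 0 := by exact_mod_cast hN.ne'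
      simp [this, aux_vol]
    · have h1 := hg n hn
      set z := UnitAddTorus.mFourier n g with hz
      have hI : ∫ x, UnitAddTorus.mFourier n x = 0 := by
        have := integral_add_right_eq_self (μ := (volume : Measure (UnitAddTorus (Fin 2))))
          (fun x => UnitAddTorus.mFourier n x) g
        simp only [aux_mF_add] at this
        rw [integral_mul_const] at this
        have h2 : (∫ x, UnitAddTorus.mFourier n x) * (z - 1) = 0 := by
          rw [mul_sub, this]; ring
        rcases mul_eq_zero.1 h2 with h | h
        · exact h
        · exact absurd (sub_eq_zero.1 h) h1
      rw [hI]
      have hpow : ∀ j : ℕ, UnitAddTorus.mFourier n (p + j • g)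
          = UnitAddTorus.mFourier n p * z ^ j := by
        intro j
        rw [aux_mF_add]
        congr 1
        induction j with
        | zero =>
          simp [UnitAddTorus.mFourier]
        | succ j ih => rw [succ_nsmul, aux_mF_add, ih, pow_succ]
      have hnz : ∀ x, ‖UnitAddTorus.mFourier n x‖ ≤ 1 := fun x => by
        have := (UnitAddTorus.mFourier n).norm_coe_le_norm x
        rwa [UnitAddTorus.mFourier_norm] at this
      simp only [hpow, ← Finset.mul_sum]
      have hz1 : 0 < ‖z - 1‖ := norm_pos_iff.2 (sub_ne_zero.2 h1)
      rw [tendsto_zero_iff_norm_tendsto_zero]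
      refine squeeze_zero (g := fun N : ℕ => (N : ℝ)⁻¹ * (2 / ‖z - 1‖)) (fun _ => norm_nonneg _) ?_ ?_
      · intro N
        rw [norm_mul, norm_inv, Complex.norm_natCast, norm_mul, geom_sum_eq h1, norm_div]
        gcongr
        have h5 : ‖z ^ N - 1‖ ≤ 2 := by
          refine (norm_sub_le _ _).trans ?_
          have : ‖z ^ N‖ ≤ 1 := by rw [norm_pow]; exact pow_le_one₀ (norm_nonneg _) (hnz g)
          rw [norm_one]; linarith
        calc _ ≤ 1 * (2 / ‖z - 1‖) := by gcongr; exact hnz p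
          _ = _ := one_mul _
      · have := (tendsto_inv_atTop_nhds_zero_nat (𝕜 := ℝ)).mul_const (2 / ‖z - 1‖)
        simpa using this
  | zero => simp
  | add φ ψ _ _ h1 h2 =>
    have := h1.add h2
    simp only [ContinuousMap.add_apply]
    rw [integral_add (hint _) (hint _)]
    refine this.congr fun N => ?_
    rw [Finset.sum_add_distrib, mul_add]
  | smul a φ _ h1 =>
    have := h1.const_mul a
    simp only [ContinuousMap.smul_apply, smul_eq_mul]
    rw [integral_const_mul]
    refine this.congr fun N => ?_
    rw [← Finset.mul_sum]; ring

lemma aux_hit (g p : UnitAddTorus (Fin 2))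
    (hg : ∀ n : Fin 2 → ℤ, n ≠ 0 → UnitAddTorus.mFourier n g ≠ 1)
    (U : Set (UnitAddTorus (Fin 2))) (hU : IsOpen U) (hne : U.Nonempty) :
    ∃ j : ℕ, p + j • g ∈ U := by
  by_contra hcon
  push Not at hcon
  have hint : ∀ φ : C(UnitAddTorus (Fin 2), ℂ), Integrable φ := fun φ =>
    φ.continuous.integrable_of_hasCompactSupport (HasCompactSupport.of_compactSpace _)
  have hUc : (Uᶜ).Nonempty := ⟨_, hcon 0⟩
  let r : UnitAddTorus (Fin 2) → ℝ := fun x => Metric.infDist x Uᶜ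
  have hr : Continuous r := Metric.continuous_infDist_pt _
  let φ : C(UnitAddTorus (Fin 2), ℂ) := ⟨fun x => (r x : ℂ), by fun_prop⟩
  have hφ0 : ∀ j : ℕ, φ (p + j • g) = 0 := by
    intro j
    have : r (p + j • g) = 0 := Metric.infDist_zero_of_mem (hcon j)
    simp [φ, this]
  have hpos : 0 < ∫ x, r x := by
    obtain ⟨q, hq⟩ := hne
    refine hr.integral_pos_of_hasCompactSupport_nonneg_nonzero
      (HasCompactSupport.of_compactSpace _) (fun x => Metric.infDist_nonneg) (x := q) ?_
    have := (hU.isClosed_compl.notMem_iff_infDist_pos hUc (x := q)).1 (by simpa using hq)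
    exact this.ne'
  have hφi : ∫ x, φ x = ((∫ x, r x : ℝ) : ℂ) := integral_ofReal
  have hmem : φ ∈ closure ((Submodule.span ℂ (Set.range (UnitAddTorus.mFourier (d := Fin 2))) :
      Submodule ℂ C(UnitAddTorus (Fin 2), ℂ)) : Set C(UnitAddTorus (Fin 2), ℂ)) := by
    rw [← Submodule.topologicalClosure_coe, UnitAddTorus.span_mFourier_closure_eq_top]
    trivial
  rw [Metric.mem_closure_iff] at hmem
  obtain ⟨ψ, hψ, hd⟩ := hmem ((∫ x, r x) / 2) (by linarith)
  rw [dist_eq_norm] at hd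
  have h1 : ‖∫ x, ψ x‖ ≤ ‖φ - ψ‖ := by
    refine le_of_tendsto (aux_avg g p hg ψ hψ).norm (Eventually.of_forall fun N => ?_)
    rw [norm_mul, norm_inv, Complex.norm_natCast]
    have : ‖∑ j ∈ Finset.range N, ψ (p + j • g)‖ ≤ N * ‖φ - ψ‖ := by
      refine (norm_sum_le_of_le (f := fun j => ψ (p + j • g)) (n := fun _ => ‖φ - ψ‖) _ fun j _ => ?_).trans (by simp)
      have := (φ - ψ).norm_coe_le_norm (p + j • g)
      simpa [hφ0] using this
    rcases Nat.eq_zero_or_pos N with h | h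
    · subst h; simp
    · have hN : (0 : ℝ) < N := by exact_mod_cast h
      calc (N : ℝ)⁻¹ * ‖∑ j ∈ Finset.range N, ψ (p + j • g)‖ ≤ (N : ℝ)⁻¹ * (N * ‖φ - ψ‖) := by gcongr
        _ = _ := by field_simp
  have h2 : ‖∫ x, (φ - ψ) x‖ ≤ ‖φ - ψ‖ := by
    have := norm_integral_le_of_norm_le_const (μ := (volume : Measure (UnitAddTorus (Fin 2))))
      (f := fun x => (φ - ψ) x) (C := ‖φ - ψ‖)
      (Eventually.of_forall fun x => (φ - ψ).norm_coe_le_norm x)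
    simpa [aux_vol] using this
  have h3 : ∫ x, (φ - ψ) x = (∫ x, φ x) - ∫ x, ψ x := integral_sub (hint _) (hint _)
  have h4 : ‖∫ x, φ x‖ = ∫ x, r x := by
    rw [hφi, Complex.norm_real, Real.norm_of_nonneg hpos.le]
  have h5 : ‖∫ x, φ x‖ ≤ ‖∫ x, (φ - ψ) x‖ + ‖∫ x, ψ x‖ := by
    rw [h3]; simpa using norm_add_le ((∫ x, φ x) - ∫ x, ψ x) (∫ x, ψ x)
  linarith

/-- every orbit of the torus translation hits every nonempty open set -/
lemma aux_min (ω ρ : ℝ)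
    (hind : ∀ a b c : ℤ, (a : ℝ) * ω + (b : ℝ) * ρ + (c : ℝ) = 0 → a = 0 ∧ b = 0 ∧ c = 0)
    (U : Set (T1 × T1)) (hU : IsOpen U) (hne : U.Nonempty) (p : T1 × T1) :
    ∃ j : ℕ, p + j • (((ω : T1), (ρ : T1)) : T1 × T1) ∈ U := by
  let e : UnitAddTorus (Fin 2) → T1 × T1 := fun x => (x 0, x 1)
  have he : Continuous e := by fun_prop
  obtain ⟨⟨a, b⟩, hq⟩ := hne
  obtain ⟨j, hj⟩ := aux_hit (![(ω : T1), (ρ : T1)] : UnitAddTorus (Fin 2))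
    (![p.1, p.2] : UnitAddTorus (Fin 2)) (aux_mF_ne ω ρ hind) (e ⁻¹' U) (hU.preimage he)
    ⟨(![a, b] : UnitAddTorus (Fin 2)), by simpa [e] using hq⟩
  refine ⟨j, ?_⟩
  have : e ((![p.1, p.2] : UnitAddTorus (Fin 2)) + j • (![(ω : T1), (ρ : T1)] : UnitAddTorus (Fin 2)))
    = p + j • (((ω : T1), (ρ : T1)) : T1 × T1) := by
    ext <;> simp [e]
  rw [← this]; exact hj

lemma aux_iter_add (ω : ℝ) (F : T1 → ℝ → ℝ) (m n : ℕ) (θ : T1) (x : ℝ) :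
    fiberIter ω F (m + n) θ x = fiberIter ω F n (θ + m • (ω : T1)) (fiberIter ω F m θ x) := by
  induction m generalizing θ x with
  | zero => simp [fiberIter]
  | succ m ih =>
    rw [Nat.succ_add, fiberIter, ih, fiberIter, succ_nsmul', add_assoc]

lemma aux_iter_succ (ω : ℝ) (F : T1 → ℝ → ℝ) (n : ℕ) (θ : T1) (x : ℝ) :
    fiberIter ω F (n + 1) θ x = F (θ + n • (ω : T1)) (fiberIter ω F n θ x) := by
  rw [aux_iter_add]; rfl

lemma aux_iter_cont (ω : ℝ) (F : T1 → ℝ → ℝ) (hF : Continuous fun p : T1 × ℝ => F p.1 p.2) (n : ℕ) :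
    Continuous fun p : T1 × ℝ => fiberIter ω F n p.1 p.2 := by
  induction n with
  | zero => simpa [fiberIter] using continuous_snd
  | succ n ih =>
    simp only [fiberIter]
    exact ih.comp (Continuous.prodMk (continuous_fst.add continuous_const) hF)

lemma aux_iter_per (ω : ℝ) (F : T1 → ℝ → ℝ) (hF : ∀ θ x, F θ (x + 1) = F θ x + 1) (n : ℕ)
    (θ : T1) (x : ℝ) : fiberIter ω F n θ (x + 1) = fiberIter ω F n θ x + 1 := by
  induction n generalizing θ x with
  | zero => rfl
  | succ n ih => simp only [fiberIter, hF, ih]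

lemma aux_D_cont (H : T1 → ℝ → ℝ) (hHc : ∀ θ, Continuous (H θ))
    (hc : Continuous fun p : T1 × ℝ => ((H p.1 p.2 : ℝ) : T1)) :
    Continuous fun q : T1 × ℝ × ℝ => H q.1 q.2.2 - H q.1 q.2.1 := by
  let g : unitInterval × (T1 × ℝ × ℝ) → ℝ := fun a =>
    H a.2.1 (a.2.2.1 + (a.1 : ℝ) * (a.2.2.2 - a.2.2.1)) - H a.2.1 a.2.2.1
  have hg : Continuous fun a => ((g a : ℝ) : T1) := by
    have h1 : Continuous fun a : unitInterval × (T1 × ℝ × ℝ) =>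
        (((a.2.1, a.2.2.1 + (a.1 : ℝ) * (a.2.2.2 - a.2.2.1))) : T1 × ℝ) := by fun_prop
    have h2 : Continuous fun a : unitInterval × (T1 × ℝ × ℝ) =>
        (((a.2.1, a.2.2.1)) : T1 × ℝ) := by fun_prop
    have := (hc.comp h1).sub (hc.comp h2)
    exact this
  have hcov := AddCircle.isCoveringMap_coe (1 : ℝ)
  have key : Continuous g := by
    refine hcov.isLocalHomeomorph.continuous_lift hcov.isSeparatedMap ⟨_, hg⟩ rfl ?_ ?_
    · simpa [g] using (continuous_const : Continuous fun _ : T1 × ℝ × ℝ => (0 : ℝ))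
    · intro a
      have h3 : Continuous fun s : unitInterval => a.2.1 + (s : ℝ) * (a.2.2 - a.2.1) := by fun_prop
      have h4 : Continuous fun s : unitInterval =>
          H a.1 (a.2.1 + (s : ℝ) * (a.2.2 - a.2.1)) - H a.1 a.2.1 :=
        ((hHc a.1).comp h3).sub continuous_const
      exact h4
  have := key.comp (Continuous.prodMk (continuous_const (y := (1 : unitInterval))) continuous_id)
  simpa [g, Function.comp_def] using this

lemma aux_inv (ω ρ : ℝ) (F H : T1 → ℝ → ℝ) (hFc : Continuous fun p : T1 × ℝ => F p.1 p.2)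
    (hHc : ∀ θ, Continuous (H θ))
    (hs : ∀ θ x, ((H (θ + (ω : T1)) (F θ x) : ℝ) : T1) = ((H θ x : ℝ) : T1) + (ρ : T1))
    (θ : T1) (x y : ℝ) :
    H (θ + (ω : T1)) (F θ y) - H (θ + (ω : T1)) (F θ x) = H θ y - H θ x := by
  have hcov := AddCircle.isCoveringMap_coe (1 : ℝ)
  have hF1 : Continuous (F θ) := hFc.comp (Continuous.prodMk continuous_const continuous_id)
  have := hcov.isSeparatedMap.const_of_comp hcov.isLocalHomeomorph.isLocallyInjective
    (g := fun x => H (θ + (ω : T1)) (F θ x) - H θ x)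
    (((hHc _).comp hF1).sub (hHc θ)) (fun a a' => by simp [hs]) x y
  linarith

lemma aux_inv_iter (ω ρ : ℝ) (F H : T1 → ℝ → ℝ) (hFc : Continuous fun p : T1 × ℝ => F p.1 p.2)
    (hHc : ∀ θ, Continuous (H θ))
    (hs : ∀ θ x, ((H (θ + (ω : T1)) (F θ x) : ℝ) : T1) = ((H θ x : ℝ) : T1) + (ρ : T1))
    (n : ℕ) (θ : T1) (x y : ℝ) :
    H (θ + n • (ω : T1)) (fiberIter ω F n θ y) - H (θ + n • (ω : T1)) (fiberIter ω F n θ x)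
      = H θ y - H θ x := by
  induction n with
  | zero => simp [fiberIter]
  | succ n ih =>
    rw [aux_iter_succ, aux_iter_succ, succ_nsmul, ← add_assoc,
      aux_inv ω ρ F H hFc hHc hs, ih]

lemma aux_semi_iter (ω ρ : ℝ) (F H : T1 → ℝ → ℝ)
    (hs : ∀ θ x, ((H (θ + (ω : T1)) (F θ x) : ℝ) : T1) = ((H θ x : ℝ) : T1) + (ρ : T1))
    (n : ℕ) (θ : T1) (x : ℝ) :
    ((H (θ + n • (ω : T1)) (fiberIter ω F n θ x) : ℝ) : T1)
      = ((H θ x : ℝ) : T1) + n • (ρ : T1) := by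
  induction n with
  | zero => simp [fiberIter]
  | succ n ih =>
    rw [aux_iter_succ, succ_nsmul, ← add_assoc, hs, ih, succ_nsmul, add_assoc]

lemma aux_per_int (H : ℝ → ℝ) (hper : ∀ x, H (x + 1) = H x + 1) (x : ℝ) (m : ℤ) :
    H (x + m) = H x + m := by
  have hf : ∀ (n : ℕ) x, H (x + n) = H x + n := by
    intro n
    induction n with
    | zero => simp
    | succ n ih => intro x; push_cast; rw [← add_assoc, hper, ih, add_assoc]
  obtain ⟨n, rfl | rfl⟩ := m.eq_nat_or_neg
  · simpa using hf n x
  · have := hf n (x + ((-(n : ℤ) : ℤ) : ℝ))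
    push_cast at this ⊢
    rw [add_assoc, neg_add_cancel, add_zero] at this
    linarith

/-- the displacement seen through `H` is at most the displacement plus one -/
lemma aux_D_le (H : ℝ → ℝ) (hm : Monotone H) (hper : ∀ x, H (x + 1) = H x + 1) (x y : ℝ) :
    H y - H x ≤ y - x + 1 := by
  have h1 : H y ≤ H (x + ⌈y - x⌉) := hm (by have := Int.le_ceil (y - x); linarith)
  rw [aux_per_int H hper] at h1
  have := Int.ceil_lt_add_one (y - x)
  linarith

/-- some value of `H` is taken on no interval of length `ε` -/
lemma aux_short (H : ℝ → ℝ) (hm : Monotone H) (hper : ∀ x, H (x + 1) = H x + 1)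
    (ε : ℝ) (hε : 0 < ε) :
    ∃ t : T1, ∀ z : ℝ, ((H z : ℝ) : T1) = t → H (z + ε) - H z ≠ 0 := by
  by_contra hcon
  push Not at hcon
  have hz : ∀ t : ℝ, ∃ z, H z = t ∧ H (z + ε) = t := by
    intro t
    obtain ⟨z, h1, h2⟩ := hcon (t : T1)
    obtain ⟨m, hm1⟩ : ∃ m : ℤ, (m : ℝ) = t - H z := by
      have h3 : ((t - H z : ℝ) : T1) = 0 := by rw [AddCircle.coe_sub, h1, sub_self]
      obtain ⟨m, hm2⟩ := (AddCircle.coe_eq_zero_iff (1 : ℝ)).1 h3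
      exact ⟨m, by simpa using hm2⟩
    refine ⟨z + m, ?_, ?_⟩
    · rw [aux_per_int H hper]; linarith
    · rw [add_right_comm, aux_per_int H hper]; linarith
  obtain ⟨M, hM⟩ := exists_nat_gt (2 / ε)
  have hM0 : (0 : ℝ) < M := lt_trans (by positivity) hM
  choose z hz1 hz2 using fun i : ℕ => hz (i / M)
  have hstep : ∀ i, z i + ε ≤ z (i + 1) := by
    intro i
    by_contra hlt
    have := hm (not_le.1 hlt).le
    rw [hz1, hz2] at this
    have h3 : (i : ℝ) / M < ((i + 1 : ℕ) : ℝ) / M := by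
      gcongr; linarith
    linarith
  have hall : ∀ i : ℕ, z 0 + i * ε ≤ z i := by
    intro i
    induction i with
    | zero => simp
    | succ i ih => have := hstep i; push_cast; linarith
  have h4 := hall M
  have h5 : 2 < M * ε := by rwa [div_lt_iff₀ hε] at hM
  have h6 : H (z 0 + 1 + 1) ≤ H (z M) := hm (by linarith)
  rw [hper, hper, hz1, hz1, div_self hM0.ne'] at h6
  simp at h6
  linarith

lemma aux_core (ω ρ : ℝ) (F H : T1 → ℝ → ℝ) (hFc : Continuous fun p : T1 × ℝ => F p.1 p.2)
    (hFper : ∀ θ x, F θ (x + 1) = F θ x + 1)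
    (hHc : ∀ θ, Continuous (H θ)) (hHm : ∀ θ, Monotone (H θ))
    (hHper : ∀ (θ : T1) (x : ℝ), H θ (x + 1) = H θ x + 1)
    (hc : Continuous fun p : T1 × ℝ => ((H p.1 p.2 : ℝ) : T1))
    (hs : ∀ θ x, ((H (θ + (ω : T1)) (F θ x) : ℝ) : T1) = ((H θ x : ℝ) : T1) + (ρ : T1))
    (hind : ∀ a b c : ℤ, (a : ℝ) * ω + (b : ℝ) * ρ + (c : ℝ) = 0 → a = 0 ∧ b = 0 ∧ c = 0)
    (ε : ℝ) (hε : 0 < ε)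
    (ρ₀ : ℝ) (hρ₀ : HasRotNum ω F ρ₀)
    (ρp : ℝ) (hρp : HasRotNum ω (fun θ x => F θ x + ε) ρp) : ρ₀ < ρp := by
  set G : T1 → ℝ → ℝ := fun θ x => F θ x + ε with hG
  have hGc : Continuous fun p : T1 × ℝ => G p.1 p.2 := hFc.add continuous_const
  have hGper : ∀ θ x, G θ (x + 1) = G θ x + 1 := by
    intro θ x; simp only [hG, hFper]; ring
  have hD := aux_D_cont H hHc hc
  let E : ℕ → T1 → ℝ → ℝ := fun n θ x =>
    H (θ + n • (ω : T1)) (fiberIter ω G n θ x) - H (θ + n • (ω : T1)) (fiberIter ω F n θ x)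
  have hE0 : ∀ θ x, E 0 θ x = 0 := by intro θ x; simp [E, fiberIter]
  have hEsucc : ∀ n θ x, E (n + 1) θ x = E n θ x +
      (H (θ + (n + 1) • (ω : T1)) (F (θ + n • (ω : T1)) (fiberIter ω G n θ x) + ε)
        - H (θ + (n + 1) • (ω : T1)) (F (θ + n • (ω : T1)) (fiberIter ω G n θ x))) := by
    intro n θ x
    have h1 := aux_inv ω ρ F H hFc hHc hs (θ + n • (ω : T1)) (fiberIter ω F n θ x)
      (fiberIter ω G n θ x)
    rw [add_assoc, ← succ_nsmul] at h1
    simp only [E]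
    rw [← h1, aux_iter_succ, aux_iter_succ]
    simp only [hG]
    ring
  have hgain : ∀ θ y, 0 ≤ H θ (y + ε) - H θ y := fun θ y =>
    sub_nonneg.2 (hHm θ (by linarith))
  have hEmono : ∀ θ x, Monotone fun n => E n θ x := fun θ x =>
    monotone_nat_of_le_succ fun n => by
      rw [hEsucc]; exact le_add_of_nonneg_right (hgain _ _)
  have hEadd : ∀ m n θ x, E (m + n) θ x
      = E m θ x + E n (θ + m • (ω : T1)) (fiberIter ω G m θ x) := by
    intro m n θ x
    have h1 := aux_inv_iter ω ρ F H hFc hHc hs n (θ + m • (ω : T1)) (fiberIter ω F m θ x)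
      (fiberIter ω G m θ x)
    simp only [E]
    rw [← h1, aux_iter_add, aux_iter_add, add_nsmul, add_assoc]
    ring
  have hEcont : ∀ n, Continuous fun p : T1 × ℝ => E n p.1 p.2 := by
    intro n
    have h1 : Continuous fun p : T1 × ℝ =>
        ((p.1 + n • (ω : T1), fiberIter ω F n p.1 p.2, fiberIter ω G n p.1 p.2) : T1 × ℝ × ℝ) :=
      (continuous_fst.add continuous_const).prodMk
        ((aux_iter_cont ω F hFc n).prodMk (aux_iter_cont ω G hGc n))
    exact hD.comp h1
  have hEper : ∀ n θ x, E n θ (x + 1) = E n θ x := by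
    intro n θ x
    simp only [E]
    rw [aux_iter_per ω F hFper, aux_iter_per ω G hGper, hHper, hHper]; ring
  have hEperZ : ∀ n θ x (m : ℤ), E n θ (x + m) = E n θ x := by
    intro n θ x m
    have := aux_per_int (fun x => E n θ x + x) (fun x => by simp only [hEper]; ring) x m
    linarith
  -- the bad set
  let Kset : Set (T1 × ℝ) := {p | p.2 ∈ Set.Icc (0 : ℝ) 1 ∧ H p.1 (p.2 + ε) - H p.1 p.2 = 0}
  have hKc : IsCompact Kset := by
    have h1 : IsCompact ((Set.univ : Set T1) ×ˢ Set.Icc (0 : ℝ) 1) :=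
      isCompact_univ.prod isCompact_Icc
    refine h1.of_isClosed_subset ?_ ?_
    · refine (isClosed_Icc.preimage continuous_snd).inter (isClosed_singleton.preimage
        (f := fun p : T1 × ℝ => H p.1 (p.2 + ε) - H p.1 p.2) ?_)
      have h2 : Continuous fun p : T1 × ℝ => ((p.1, p.2, p.2 + ε) : T1 × ℝ × ℝ) := by fun_prop
      exact hD.comp h2
    · rintro ⟨a, b⟩ ⟨h2, -⟩
      exact ⟨trivial, h2⟩
  let B : Set (T1 × T1) := (fun p : T1 × ℝ => ((p.1, ((H p.1 p.2 : ℝ) : T1)) : T1 × T1)) '' Kset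
  have hBc : IsClosed B := (hKc.image (continuous_fst.prodMk hc)).isClosed
  have hBmem : ∀ θ z, H θ (z + ε) - H θ z = 0 → (θ, ((H θ z : ℝ) : T1)) ∈ B := by
    intro θ z hz
    refine ⟨(θ, z + ((-⌊z⌋ : ℤ) : ℝ)), ⟨⟨?_, ?_⟩, ?_⟩, ?_⟩
    · have := Int.floor_le z; push_cast; linarith
    · have := Int.lt_floor_add_one z; push_cast; linarith
    · simp only
      rw [add_right_comm, aux_per_int _ (hHper θ), aux_per_int _ (hHper θ)]; linarith
    · simp only
      rw [aux_per_int _ (hHper θ)]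
      have : ((((-⌊z⌋ : ℤ) : ℝ)) : T1) = 0 :=
        (AddCircle.coe_eq_zero_iff (1 : ℝ)).2 ⟨-⌊z⌋, by simp⟩
      rw [AddCircle.coe_add, this, add_zero]
  have hBne : (Bᶜ).Nonempty := by
    obtain ⟨t, ht⟩ := aux_short (H 0) (hHm 0) (hHper 0) ε hε
    refine ⟨((0 : T1), t), ?_⟩
    rintro ⟨⟨a, z⟩, ⟨-, h2⟩, h3⟩
    simp only [Prod.mk.injEq] at h3 h2
    obtain ⟨rfl, h4⟩ := h3
    exact ht z h4 h2
  -- uniform hitting time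
  let τ : T1 × T1 := ((ω : T1), (ρ : T1))
  obtain ⟨N, hN⟩ : ∃ N : ℕ, ∀ p : T1 × T1, ∃ j < N, p + (j + 1) • τ ∈ Bᶜ := by
    have hcov : (Set.univ : Set (T1 × T1)) ⊆ ⋃ j : ℕ, (fun p => p + (j + 1) • τ) ⁻¹' Bᶜ := by
      intro p _
      obtain ⟨j, hj⟩ := aux_min ω ρ hind Bᶜ hBc.isOpen_compl hBne (p + τ)
      refine Set.mem_iUnion.2 ⟨j, ?_⟩
      rw [Set.mem_preimage, succ_nsmul', ← add_assoc]
      exact hj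
    obtain ⟨s, hs'⟩ := isCompact_univ.elim_finite_subcover _
      (fun j => hBc.isOpen_compl.preimage (by fun_prop)) hcov
    refine ⟨s.sup id + 1, fun p => ?_⟩
    obtain ⟨j, hj, hp⟩ := Set.mem_iUnion₂.1 (hs' (Set.mem_univ p))
    exact ⟨j, Nat.lt_succ_of_le (Finset.le_sup (f := id) hj), hp⟩
  have hpos : ∀ θ x, 0 < E N θ x := by
    intro θ x
    by_contra hle
    have hz : ∀ j ≤ N, E j θ x = 0 := by
      intro j hj
      have h1 := hEmono θ x hj
      have h2 := hEmono θ x (Nat.zero_le j)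
      simp only [hE0] at h1 h2
      linarith
    obtain ⟨j, hj, hjB⟩ := hN (θ, ((H θ x : ℝ) : T1))
    apply hjB
    have h1 := hEsucc j θ x
    rw [hz j hj.le, hz (j + 1) hj, zero_add] at h1
    have h2 := hBmem _ _ h1.symm
    have h3 : H (θ + j • (ω : T1)) (fiberIter ω G j θ x)
        = H (θ + j • (ω : T1)) (fiberIter ω F j θ x) := sub_eq_zero.1 (hz j hj.le)
    convert h2 using 1
    ext
    · simp [τ]
    · simp only [τ, Prod.snd_add, Prod.smul_snd]
      rw [succ_nsmul (ω : T1), ← add_assoc θ, hs, h3, aux_semi_iter ω ρ F H hs, succ_nsmul, add_assoc]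
  obtain ⟨δ, hδ, hEδ⟩ : ∃ δ > 0, ∀ θ x, δ ≤ E N θ x := by
    have h1 : IsCompact ((Set.univ : Set T1) ×ˢ Set.Icc (0 : ℝ) 1) :=
      isCompact_univ.prod isCompact_Icc
    obtain ⟨p, -, hp⟩ := h1.exists_isMinOn ⟨((0 : T1), (0 : ℝ)), by simp⟩ (hEcont N).continuousOn
    refine ⟨E N p.1 p.2, hpos _ _, fun θ x => ?_⟩
    rw [← hEperZ N θ x (-⌊x⌋)]
    refine hp (a := (θ, x + ((-⌊x⌋ : ℤ) : ℝ))) ⟨trivial, ?_, ?_⟩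
    · have := Int.floor_le x; push_cast; linarith
    · have := Int.lt_floor_add_one x; push_cast; linarith
  have hN0 : 0 < N := by
    rcases Nat.eq_zero_or_pos N with h | h
    · have := hpos 0 0; rw [h, hE0] at this; exact absurd this (lt_irrefl _)
    · exact h
  have hEk : ∀ k : ℕ, (k : ℝ) * δ ≤ E (k * N) 0 0 := by
    intro k
    induction k with
    | zero => simp [hE0]
    | succ k ih =>
      rw [Nat.succ_mul, hEadd]
      have := hEδ (0 + (k * N) • (ω : T1)) (fiberIter ω G (k * N) 0 0)
      push_cast
      linarith
  have hlim : Tendsto (fun n : ℕ => (fiberIter ω G n 0 0 - fiberIter ω F n 0 0) / (n : ℝ)) atTop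
      (𝓝 (ρp - ρ₀)) := by
    refine ((hρp 0 0).sub (hρ₀ 0 0)).congr fun n => ?_
    ring
  have hsub : Tendsto (fun k : ℕ => k * N) atTop atTop :=
    tendsto_id.atTop_mul_const' hN0
  have hlim2 := hlim.comp hsub
  have hlow : Tendsto (fun k : ℕ => δ / N - (1 / (N : ℝ)) * (k : ℝ)⁻¹) atTop (𝓝 (δ / N)) := by
    have := (tendsto_inv_atTop_nhds_zero_nat (𝕜 := ℝ)).const_mul (1 / (N : ℝ))
    simpa using this.const_sub (δ / N)
  have hNr : (0 : ℝ) < N := by exact_mod_cast hN0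
  have hfin : δ / N ≤ ρp - ρ₀ := by
    refine le_of_tendsto_of_tendsto hlow hlim2 ?_
    filter_upwards [eventually_gt_atTop 0] with k hk
    have hkr : (0 : ℝ) < k := by exact_mod_cast hk
    simp only [Function.comp]
    have h1 := aux_D_le (H (0 + (k * N) • (ω : T1))) (hHm _) (hHper _)
      (fiberIter ω F (k * N) 0 0) (fiberIter ω G (k * N) 0 0)
    have h2 := hEk k
    simp only [E] at h2
    rw [le_div_iff₀ (by push_cast; positivity)]
    push_cast
    have h3 : (δ / N - 1 / (N : ℝ) * (k : ℝ)⁻¹) * (k * N) = k * δ - 1 := by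
      field_simp
    rw [h3]
    linarith
  have : 0 < δ / N := by positivity
  linarith

lemma aux_refl (ω : ℝ) (F : T1 → ℝ → ℝ) (n : ℕ) (θ : T1) (x : ℝ) :
    fiberIter ω (fun θ x => -F θ (-x)) n θ x = -fiberIter ω F n θ (-x) := by
  induction n generalizing θ x with
  | zero => simp [fiberIter]
  | succ n ih => simp only [fiberIter, ih, neg_neg]

lemma aux_refl_rot (ω : ℝ) (F : T1 → ℝ → ℝ) (ρ : ℝ) (hρ : HasRotNum ω F ρ) :
    HasRotNum ω (fun θ x => -F θ (-x)) (-ρ) := by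
  intro θ x
  refine (hρ θ (-x)).neg.congr fun n => ?_
  rw [aux_refl]
  ring

/-- if `f` is semi-conjugate (by a fiber-respecting semi-conjugacy with
monotone degree-one fiber maps) to the irrational torus translation
`(θ,x) ↦ (θ+ω, x+ρ)` with `ω, ρ, 1` rationally independent, then the fibered rotation
number is strictly monotone at `f`. -/
theorem semiconjugate_strictly_monotone
    (ω : ℝ) (hω : Irrational ω)
    (F : T1 → ℝ → ℝ) (hF : IsQpfLift ω F)
    (f : T1 × T1 → T1 × T1) (hfc : Continuous f)
    (hfproj : ∀ (θ : T1) (x : ℝ), f (θ, (x : T1)) = (θ + (ω : T1), ((F θ x : ℝ) : T1)))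
    (ρ₀ : ℝ) (hρ₀ : HasRotNum ω F ρ₀)
    (ρ : ℝ)
    (h : T1 × T1 → T1 × T1) (hhc : Continuous h) (hhs : Function.Surjective h)
    (hπ : ∀ p : T1 × T1, (h p).1 = p.1)
    (hsemi : ∀ p : T1 × T1, h (f p) = ((h p).1 + (ω : T1), (h p).2 + (ρ : T1)))
    (H : T1 → ℝ → ℝ)
    (hHc : ∀ θ, Continuous (H θ)) (hHm : ∀ θ, Monotone (H θ))
    (hHper : ∀ (θ : T1) (x : ℝ), H θ (x + 1) = H θ x + 1)
    (hHproj : ∀ (θ : T1) (x : ℝ), h (θ, (x : T1)) = (θ, ((H θ x : ℝ) : T1)))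
    (hind : ∀ a b c : ℤ, (a : ℝ) * ω + (b : ℝ) * ρ + (c : ℝ) = 0 → a = 0 ∧ b = 0 ∧ c = 0)
    (ε : ℝ) (hε : 0 < ε)
    (ρp : ℝ) (hρp : HasRotNum ω (fun θ x => F θ x + ε) ρp)
    (ρm : ℝ) (hρm : HasRotNum ω (fun θ x => F θ x + (-ε)) ρm) :
    ρm < ρ₀ ∧ ρ₀ < ρp := by
  have hc : Continuous fun p : T1 × ℝ => ((H p.1 p.2 : ℝ) : T1) := by
    have h1 : Continuous fun p : T1 × ℝ => ((p.1, ((p.2 : ℝ) : T1)) : T1 × T1) :=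
      continuous_fst.prodMk ((AddCircle.continuous_mk' 1).comp continuous_snd)
    have h2 := (hhc.comp h1).snd
    simpa [Function.comp_def, hHproj] using h2
  have hs : ∀ θ x, ((H (θ + (ω : T1)) (F θ x) : ℝ) : T1) = ((H θ x : ℝ) : T1) + (ρ : T1) := by
    intro θ x
    have := congrArg Prod.snd (hsemi (θ, (x : T1)))
    rw [hfproj, hHproj, hHproj] at this
    exact this
  refine ⟨?_, aux_core ω ρ F H hF.cont hF.per hHc hHm hHper hc hs hind ε hε ρ₀ hρ₀ ρp hρp⟩
  have hneg : Continuous fun p : T1 × ℝ => ((p.1, -p.2) : T1 × ℝ) := by fun_prop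
  have key := aux_core ω (-ρ) (fun θ x => -F θ (-x)) (fun θ x => -H θ (-x))
    (hF.cont.comp hneg).neg
    (fun θ x => by
      have := hF.per θ (-(x + 1))
      rw [show -(x + 1) + 1 = -x by ring] at this
      linarith)
    (fun θ => ((hHc θ).comp continuous_neg).neg)
    (fun θ x y hxy => neg_le_neg (hHm θ (neg_le_neg hxy)))
    (fun θ x => by
      have := hHper θ (-(x + 1))
      rw [show -(x + 1) + 1 = -x by ring] at this
      linarith)
    (by
      have := (hc.comp hneg).neg
      exact this)
    (fun θ x => by
      have := hs θ (-x)
      simp only [neg_neg, AddCircle.coe_neg, this]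
      abel)
    (fun a b c h => by
      have := hind a (-b) c (by push_cast at h ⊢; linarith)
      omega)
    ε hε (-ρ₀) (aux_refl_rot ω F ρ₀ hρ₀) (-ρm) (by
      have := aux_refl_rot ω _ ρm hρm
      have h2 : (fun (θ : T1) (x : ℝ) => -(F θ (-x) + -ε)) = fun θ x => -F θ (-x) + ε := by
        ext θ x; ring
      rw [h2] at this
      exact this)
  linarith
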